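/- Let λ ∈ (0, 1/2), f : 𝕋 → ℝ continuous, E ∈ ℝ, and suppose Λ : S → ℝP¹ is a map on the standard solenoid and C, c > 0 are constants such that for every ω̃ ∈ S and every unit vector v spanning Λ(ω̃), one has ‖A^n_{E−f̃}(ω̃) v‖ ≤ C e^{−cn} for all n ∈ ℕ. Then Λ depends only on the first coordinate: Λ(ω, x, y) = Λ(ω, x', y') whenever (ω, x, y), (ω, x', y') ∈ S. -/

import Mathlib

open Filter Topology Real

noncomputable section

/-- The circle `𝕋 = ℝ/ℤ`. -/
abbrev 𝕋 : Type := AddCircle (1 : ℝ)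

/-- The doubling map `T : ω ↦ 2ω` on the circle. -/
def doubling : 𝕋 → 𝕋 := fun ω => (2 : ℤ) • ω

/-- `cos (2πω)` as a function on the circle. -/
def cos2pi : 𝕋 → ℝ :=
  Function.Periodic.lift (f := fun x : ℝ => Real.cos (2 * π * x)) (c := 1)
    (by intro x; simp [mul_add, Real.cos_add_two_pi])

/-- `sin (2πω)` as a function on the circle. -/
def sin2pi : 𝕋 → ℝ :=
  Function.Periodic.lift (f := fun x : ℝ => Real.sin (2 * π * x)) (c := 1)
    (by intro x; simp [mul_add, Real.sin_add_two_pi])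

/-- The solid torus `𝔗 = 𝕋 × D²`, realized as a subset of `𝕋 × ℝ × ℝ`. -/
def solidTorus : Set (𝕋 × ℝ × ℝ) := {p | p.2.1 ^ 2 + p.2.2 ^ 2 ≤ 1}

/-- The solenoid map `F(ω,x,y) = (2ω, λx + cos(2πω)/2, λy + sin(2πω)/2)`. -/
def solmap (lam : ℝ) : 𝕋 × ℝ × ℝ → 𝕋 × ℝ × ℝ :=
  fun p => (doubling p.1, lam * p.2.1 + cos2pi p.1 / 2, lam * p.2.2 + sin2pi p.1 / 2)

/-- The standard solenoid `S = ⋂ₙ Fⁿ(𝔗)`. -/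
def solenoid (lam : ℝ) : Set (𝕋 × ℝ × ℝ) := ⋂ n : ℕ, (solmap lam)^[n] '' solidTorus

/-- The one-step transfer matrix `A_{E-g}(ω) = [[E - g(ω), -1], [1, 0]]`. -/
def transfer {α : Type*} (g : α → ℝ) (E : ℝ) (ω : α) : Matrix (Fin 2) (Fin 2) ℝ :=
  !![E - g ω, -1; 1, 0]

/-- The `n`-step transfer matrix cocycle `Aⁿ_{E-g}(ω) = A(Tⁿ⁻¹ω) ⋯ A(Tω) A(ω)`
over the base dynamics `T`. -/
def transferN {α : Type*} (T : α → α) (g : α → ℝ) (E : ℝ) : ℕ → α → Matrix (Fin 2) (Fin 2) ℝ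
  | 0, _ => 1
  | n + 1, ω => transfer g E (T^[n] ω) * transferN T g E n ω


/-- The real projective line `ℝP¹`, as the quotient of `ℝ² \ {0}` by proportionality. -/
abbrev RP1 : Type :=
  Quot (fun v w : {v : Fin 2 → ℝ // v ≠ 0} => ∃ c : ℝ, c • (v : Fin 2 → ℝ) = (w : Fin 2 → ℝ))

/-!
The cocycle over the solenoid is a pullback from the doubling map, so over two points with the same
first coordinate the same matrices `Aⁿ` contract the spanning vectors `v` and `w`. As `det Aⁿ = 1`,
the determinant of the matrix `(v | w)` equals that of `(Aⁿv | Aⁿw)`, which tends to `0`.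
-/

section Determinant

variable {ι n : Type*} [Fintype n] [DecidableEq n] [Nonempty n] {l : Filter ι} [l.NeBot]

theorem det_eq_zero_of_tendsto_mul_zero {R : Type*} [CommRing R] [TopologicalSpace R]
    [IsTopologicalRing R] [T2Space R] {A : ι → Matrix n n R} {V : Matrix n n R}
    (hA : ∀ i, (A i).det = 1) (hV : Tendsto (fun i => A i * V) l (𝓝 0)) : V.det = 0 := by
  have hdet : Tendsto (fun i => (A i * V).det) l (𝓝 (Matrix.det 0)) :=
    (continuous_id.matrix_det.tendsto 0).comp hV
  simp only [Matrix.det_mul, hA, one_mul, Matrix.det_zero] at hdet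
  exact tendsto_nhds_unique tendsto_const_nhds hdet

theorem not_linearIndependent_of_tendsto_mulVec_zero {K : Type*} [Field K] [TopologicalSpace K]
    [IsTopologicalRing K] [T2Space K] {A : ι → Matrix n n K} {v : n → n → K}
    (hA : ∀ i, (A i).det = 1) (hv : ∀ j, Tendsto (fun i => (A i).mulVec (v j)) l (𝓝 0)) :
    ¬ LinearIndependent K v := by
  have hV : Tendsto (fun i => A i * (Matrix.of v).transpose) l (𝓝 0) :=
    tendsto_pi_nhds.2 fun r => tendsto_pi_nhds.2 fun j => tendsto_pi_nhds.1 (hv j) r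
  have hdet : (Matrix.of v).det = 0 := by
    rw [← Matrix.det_transpose, det_eq_zero_of_tendsto_mul_zero hA hV]
  intro hli
  have hunit : IsUnit (Matrix.of v) := Matrix.linearIndependent_rows_iff_isUnit.1 hli
  exact ((Matrix.isUnit_iff_isUnit_det _).1 hunit).ne_zero hdet

end Determinant

theorem RP1.exists_norm_eq_one_and_eq_mk (L : RP1) :
    ∃ v : {v : Fin 2 → ℝ // v ≠ 0}, ‖(v : Fin 2 → ℝ)‖ = 1 ∧ L = Quot.mk _ v := by
  obtain ⟨⟨u, hu⟩, rfl⟩ := Quot.exists_rep L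
  have hnorm : ‖u‖ ≠ 0 := norm_ne_zero_iff.2 hu
  exact ⟨⟨‖u‖⁻¹ • u, smul_ne_zero (inv_ne_zero hnorm) hu⟩, norm_smul_inv_norm hu,
    Quot.sound ⟨‖u‖⁻¹, rfl⟩⟩

theorem RP1.mk_eq_mk_of_not_linearIndependent {v w : {v : Fin 2 → ℝ // v ≠ 0}}
    (h : ¬ LinearIndependent ℝ ![(v : Fin 2 → ℝ), w]) : (Quot.mk _ v : RP1) = Quot.mk _ w := by
  rw [LinearIndependent.pair_iff' v.2] at h
  push Not at h
  exact Quot.sound h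

theorem det_transferN {α : Type*} (T : α → α) (g : α → ℝ) (E : ℝ) (n : ℕ) (ω : α) :
    (transferN T g E n ω).det = 1 := by
  induction n with
  | zero => exact Matrix.det_one
  | succ n ih =>
    rw [transferN, Matrix.det_mul, ih, transfer, Matrix.det_fin_two_of]
    ring

theorem transferN_comp_of_semiconj {α β : Type*} {F : α → α} {T : β → β} {φ : α → β}
    (hφ : Function.Semiconj φ F T) (g : β → ℝ) (E : ℝ) (n : ℕ) (x : α) :
    transferN F (g ∘ φ) E n x = transferN T g E n (φ x) := by
  induction n with
  | zero => rfl
  | succ n ih =>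
    simp only [transferN, transfer, Function.comp_apply, ih, (hφ.iterate_right n).eq x]

theorem semiconj_fst_solmap (lam : ℝ) : Function.Semiconj Prod.fst (solmap lam) doubling :=
  fun _ => rfl

theorem tendsto_const_mul_exp_neg_mul_natCast (C : ℝ) {c : ℝ} (hc : 0 < c) :
    Tendsto (fun n : ℕ => C * Real.exp (-c * n)) atTop (𝓝 0) := by
  have hsum : Summable fun n : ℕ => Real.exp (n * -c) :=
    Real.summable_exp_nat_mul_iff.2 (neg_lt_zero.2 hc)
  simpa only [mul_comm _ (-c), mul_zero] using hsum.tendsto_atTop_zero.const_mul C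

theorem stable_section_depends_only_on_base_general {α β : Type*} {F : α → α} {T : β → β}
    {φ : α → β} (hφ : Function.Semiconj φ F T) (g : β → ℝ) (E : ℝ) {S : Set α} {Λ : S → RP1}
    (hΛ : ∀ p : S, ∃ v : {v : Fin 2 → ℝ // v ≠ 0}, Λ p = Quot.mk _ v ∧
      Tendsto (fun n => (transferN F (g ∘ φ) E n p).mulVec v) atTop (𝓝 0))
    {p q : S} (hpq : φ p = φ q) : Λ p = Λ q := by
  obtain ⟨v, hpv, hv⟩ := hΛ p
  obtain ⟨w, hqw, hw⟩ := hΛ q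
  simp only [transferN_comp_of_semiconj hφ] at hv hw
  rw [← hpq] at hw
  rw [hpv, hqw]
  apply RP1.mk_eq_mk_of_not_linearIndependent
  exact not_linearIndependent_of_tendsto_mulVec_zero (fun n => det_transferN T g E n (φ p))
    (Fin.forall_fin_two.2 ⟨hv, hw⟩)

/-- If `Λ : S → ℝP¹` is a section on the standard solenoid such that unit
vectors `v` spanning `Λ(ω̃)` satisfy `‖Aⁿ_{E-f̃}(ω̃) v‖ ≤ C e^{-cn}` for all `n`, then `Λ`
depends only on the first coordinate: `Λ(ω,x,y) = Λ(ω,x',y')` whenever both points lie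
in `S`. -/
theorem stable_section_depends_only_on_base (lam : ℝ) (hlam : lam ∈ Set.Ioo (0 : ℝ) (1/2))
    (f : 𝕋 → ℝ) (hf : Continuous f) (E : ℝ) (Λ : (solenoid lam) → RP1)
    (C c : ℝ) (hC : 0 < C) (hc : 0 < c)
    (hdecay : ∀ (ω' : solenoid lam) (v : Fin 2 → ℝ) (hv : v ≠ 0), ‖v‖ = 1 →
      Λ ω' = Quot.mk _ (⟨v, hv⟩ : {u : Fin 2 → ℝ // u ≠ 0}) →
      ∀ n : ℕ,
        ‖(transferN (solmap lam) (fun q : 𝕋 × ℝ × ℝ => f q.1) E n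
            (ω' : 𝕋 × ℝ × ℝ)).mulVec v‖ ≤ C * Real.exp (-c * n)) :
    ∀ (ω : 𝕋) (x y x' y' : ℝ) (h1 : (ω, x, y) ∈ solenoid lam)
      (h2 : (ω, x', y') ∈ solenoid lam),
      Λ ⟨(ω, x, y), h1⟩ = Λ ⟨(ω, x', y'), h2⟩ := by
  choose v hv hΛ using fun p => RP1.exists_norm_eq_one_and_eq_mk (Λ p)
  exact fun _ _ _ _ _ _ _ => stable_section_depends_only_on_base_general
    (semiconj_fst_solmap lam) f E (fun p => ⟨v p, hΛ p, squeeze_zero_norm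
      (hdecay p (v p) (v p).2 (hv p) (hΛ p)) (tendsto_const_mul_exp_neg_mul_natCast C hc)⟩) rfl
end
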